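/- Let Q = x^30 - 13x^29 + 116x^28 - 899x^27 + 6003x^26 - 33002x^25 + 142158x^24 - 437871x^23 + 599981x^22 + 3161522x^21 - 30157709x^20 + 149069425x^19 - 545068137x^18 + 1602112888x^17 - 3929042061x^16 + 8240756348x^15 - 15020495335x^14 + 23992472995x^13 - 33394267804x^12 + 40034881756x^11 - 40888329774x^10 + 35730188833x^9 - 27316581262x^8 + 17713731976x^7 - 7068248851x^6 - 1463296732x^5 + 4054490087x^4 - 2555610007x^3 + 2573924261x^2 + 2363203645x - 261910751 ∈ ℚ[x], which is irreducible, and let K = ℚ[x]/(Q) be the number field it defines. The discriminant of K over ℚ equals 29^43. -/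

import Mathlib

open Polynomial

noncomputable def Q : Polynomial ℚ :=
  X^30 - 13*X^29 + 116*X^28 - 899*X^27 + 6003*X^26 - 33002*X^25 + 142158*X^24 - 437871*X^23 + 599981*X^22 + 3161522*X^21 - 30157709*X^20 + 149069425*X^19 - 545068137*X^18 + 1602112888*X^17 - 3929042061*X^16 + 8240756348*X^15 - 15020495335*X^14 + 23992472995*X^13 - 33394267804*X^12 + 40034881756*X^11 - 40888329774*X^10 + 35730188833*X^9 - 27316581262*X^8 + 17713731976*X^7 - 7068248851*X^6 - 1463296732*X^5 + 4054490087*X^4 - 2555610007*X^3 + 2573924261*X^2 + 2363203645*X - 261910751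

/-!
Let `y` be the root of `Q` in `𝓞 K`, and let `i` be the determinant of its powers in a `ℤ`-basis
of `𝓞 K`, so that `i ^ 2 * disc K = disc Q`. The Euclidean algorithm gives
`disc Q = 29 ^ 43 * (19 ^ 2 * m) ^ 2` with `m` prime to `19`, and it remains to show that `19 ^ 2`
and `m` divide `i` whereas `29` does not.

Suppose `F = h ^ 2 * A + N * h * B + N ^ 2 * E` is monic with root `y`, and put
`G = h * A + N * B`. Then `G(y) ^ 2` is `N * B(y) * G(y)` up to a multiple of `N ^ 2`, so
`G(y) / N` is integral, and replacing the powers of `y` from `y ^ deg G` on by the elements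
`y ^ k * G(y) / N` shows that `N ^ deg h` divides `i`. This applies to `N = 19` with `h` quadratic,
and to `N = m` with `h = X - r`, where `r` is a double root of `Q` modulo `m`; the factorization of
`m` is not needed.

Modulo `29`, `Q` is `(X - 13) * (X - 4) ^ 29`. If `29` divided `i`, some polynomial `f` of degree
less than `30`, nonzero modulo `29`, would satisfy `29 ∣ f(y)`. Dividing out common linear factors,
`29` would divide a product of `29` of the elements `y - 13`, `y - 4`; taking norms, `29 ^ 30` would
divide a product of `29` values of `Q` at `13` and `4`, none of which is divisible by `29 ^ 2`.
-/

section Determinants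

open Module

variable {R S : Type*} [CommRing R] [CommRing S] [Algebra R S] {n : ℕ}

lemma discr_eq_det_sq_mul_discr {ι : Type*} [Fintype ι] [DecidableEq ι] (b : Basis ι R S)
    (v : ι → S) : Algebra.discr R v = b.det v ^ 2 * Algebra.discr R b := by
  rw [← b.toMatrix_map_vecMul v, Algebra.discr_of_matrix_vecMul, b.det_apply]
  rw [b.toMatrix_map_vecMul v]

lemma det_aeval_eq_det_pow (b : Basis (Fin n) R S) (y : S) {g : Fin n → R[X]}
    (hdeg : ∀ i, (g i).natDegree = i) (hmonic : ∀ i, (g i).Monic) :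
    b.det (fun i ↦ aeval y (g i)) = b.det (fun i ↦ y ^ (i : ℕ)) := by
  have key : b.toMatrix (fun i ↦ aeval y (g i)) =
      b.toMatrix (fun i : Fin n ↦ y ^ (i : ℕ)) * Matrix.of fun i j : Fin n ↦ (g j).coeff i := by
    ext i j
    have hj : (g j).natDegree < n := (hdeg j).trans_lt j.isLt
    simp only [Basis.toMatrix_apply, Matrix.mul_apply, Matrix.of_apply, aeval_eq_sum_range' hj,
      Finset.sum_range, map_sum, map_smul, Finsupp.coe_finsetSum, Finset.sum_apply,
      Finsupp.smul_apply, smul_eq_mul, mul_comm]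
  rw [b.det_apply, b.det_apply, key, Matrix.det_mul, Matrix.det_matrixOfPolynomials g hdeg hmonic,
    mul_one]

lemma pow_dvd_det_pow_of_aeval_eq (b : Basis (Fin n) R S) {y z : S} {N : R} {G : R[X]}
    (hG : G.Monic) (hdeg : G.natDegree ≤ n) (hz : algebraMap R S N * z = aeval y G) :
    N ^ (n - G.natDegree) ∣ b.det (fun i ↦ y ^ (i : ℕ)) := by
  nontriviality R
  let c : Fin n → R := fun i ↦ if (i : ℕ) < G.natDegree then 1 else N
  let g : Fin n → R[X] := fun i ↦
    if (i : ℕ) < G.natDegree then X ^ (i : ℕ) else X ^ (i - G.natDegree) * G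
  let w : Fin n → S := fun i ↦
    if (i : ℕ) < G.natDegree then y ^ (i : ℕ) else y ^ (i - G.natDegree) * z
  have hw : (fun i ↦ aeval y (g i)) = fun i ↦ c i • w i := by
    ext i
    by_cases hi : (i : ℕ) < G.natDegree
    · simp [g, c, w, hi]
    · simp [g, c, w, hi, ← hz, Algebra.smul_def, mul_left_comm]
  have hc : ∏ i, c i = N ^ (n - G.natDegree) := by
    obtain ⟨k, rfl⟩ := Nat.exists_eq_add_of_le hdeg
    simp [c, Fin.prod_univ_add]
  rw [← det_aeval_eq_det_pow b y (g := g), hw, AlternatingMap.map_smul_univ, hc]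
  · exact Dvd.intro _ rfl
  · intro i
    by_cases hi : (i : ℕ) < G.natDegree
    · simp [g, hi]
    · simp only [g, hi, if_false, (monic_X_pow _).natDegree_mul hG, natDegree_X_pow]
      lia
  · intro i
    by_cases hi : (i : ℕ) < G.natDegree
    · simp [g, hi, monic_X_pow]
    · simpa [g, hi] using (monic_X_pow _).mul hG

lemma dvd_of_sq_eq {S : Type*} [CommRing S] [IsDomain S] [IsIntegrallyClosed S] {N x u v : S}
    (h : x ^ 2 = N * u * x + N ^ 2 * v) : N ∣ x := by
  obtain rfl | hN := eq_or_ne N 0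
  · simp_all
  set φ := algebraMap S (FractionRing S) with hφ
  have hN' : φ N ≠ 0 := by simpa [hφ] using hN
  have hint : IsIntegral S (φ x / φ N) := by
    refine ⟨X ^ 2 - (C u * X + C v), monic_X_pow_sub (by compute_degree!), ?_⟩
    have hφx : φ x ^ 2 = φ N * φ u * φ x + φ N ^ 2 * φ v := by simpa using congrArg φ h
    simp only [eval₂_sub, eval₂_add, eval₂_mul, eval₂_pow, eval₂_X, eval₂_C, ← hφ]
    field_simp
    linear_combination hφx
  obtain ⟨z, hz⟩ := IsIntegrallyClosed.isIntegral_iff.mp hint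
  refine ⟨z, FaithfulSMul.algebraMap_injective S (FractionRing S) ?_⟩
  rw [map_mul, hz, mul_div_cancel₀ _ hN']

lemma pow_natDegree_dvd_det_pow [IsDomain S] [IsIntegrallyClosed S] (b : Basis (Fin n) R S)
    {y : S} {F h A B E : R[X]} {N : R} (hF : F.Monic) (hFn : F.natDegree = n) (hy : aeval y F = 0)
    (hh : h.Monic) (hE : E.degree < F.degree)
    (hdecomp : F = h ^ 2 * A + C N * h * B + C N ^ 2 * E) :
    N ^ h.natDegree ∣ b.det (fun i ↦ y ^ (i : ℕ)) := by
  nontriviality R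
  let G := h * A + C N * B
  have hhG : h * G = F - N ^ 2 • E := by
    rw [hdecomp, smul_eq_C_mul, C_pow]; ring
  have hlt : (N ^ 2 • E).degree < F.degree := (degree_smul_le _ _).trans_lt hE
  have hG : G.Monic := hh.of_mul_monic_left (hhG ▸ hF.sub_of_left hlt)
  have hdeg : h.natDegree + G.natDegree = n := by
    rw [← hh.natDegree_mul hG, hhG, natDegree_eq_of_degree_eq (degree_sub_eq_left_of_degree_lt hlt),
      hFn]
  obtain ⟨z, hz⟩ : algebraMap R S N ∣ aeval y G := by
    have hG2 : G ^ 2 = C N * B * G + A * F - C N ^ 2 * (A * E) := by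
      rw [hdecomp]; ring
    apply dvd_of_sq_eq (u := aeval y B) (v := -aeval y (A * E))
    rw [← map_pow, hG2]
    simp [hy, sub_eq_add_neg]
  rw [← Nat.add_sub_cancel (n := h.natDegree) (m := G.natDegree), hdeg]
  exact pow_dvd_det_pow_of_aeval_eq b hG (by lia) hz.symm

lemma exists_eq_sq_mul_add (F : R[X]) (r : R) :
    ∃ A, F = (X - C r) ^ 2 * A + C (F.derivative.eval r) * (X - C r) + C (F.eval r) := by
  obtain ⟨G, hG⟩ := X_sub_C_dvd_sub_C_eval (p := F) (a := r)
  obtain ⟨A, hA⟩ := X_sub_C_dvd_sub_C_eval (p := G) (a := r)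
  have hder : F.derivative.eval r = G.eval r := by
    rw [eq_add_of_sub_eq hG]
    simp
  refine ⟨A, ?_⟩
  rw [hder]
  linear_combination hG + (X - C r) * hA

lemma dvd_det_pow_of_dvd_eval [IsDomain S] [IsIntegrallyClosed S] (b : Basis (Fin n) R S) {y : S}
    {F : R[X]} {r N : R} (hF : F.Monic) (hFn : F.natDegree = n) (hy : aeval y F = 0)
    (heval : N ^ 2 ∣ F.eval r) (hderiv : N ∣ F.derivative.eval r) :
    N ∣ b.det (fun i ↦ y ^ (i : ℕ)) := by
  nontriviality R
  obtain ⟨A, hA⟩ := exists_eq_sq_mul_add F r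
  obtain ⟨e, he⟩ := heval
  obtain ⟨c, hc⟩ := hderiv
  have hpos : 0 < F.natDegree := by
    refine Nat.pos_of_ne_zero fun h ↦ ?_
    simp [hF.natDegree_eq_zero.mp h] at hy
  have hdecomp : F = (X - C r) ^ 2 * A + C N * (X - C r) * C c + C N ^ 2 * C e := by
    rw [hc, he, C_mul, C_mul, C_pow] at hA
    linear_combination hA
  simpa using pow_natDegree_dvd_det_pow b hF hFn hy (monic_X_sub_C r)
    (degree_C_le.trans_lt (natDegree_pos_iff_degree_pos.mp hpos)) hdecomp

end Determinants

section Maximality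

open Module

variable {R S : Type*} [CommRing R] [CommRing S] [Algebra R S]

lemma exists_mulVec_eq_smul_of_dvd_det {ι : Type*} [Fintype ι] [DecidableEq ι] {p : R}
    (hp : Prime p) {M : Matrix ι ι R} (h : p ∣ M.det) :
    ∃ v w : ι → R, (∃ i, ¬ p ∣ v i) ∧ M.mulVec v = p • w := by
  let φ := Ideal.Quotient.mk (Ideal.span {p})
  have hφ (x : R) : φ x = 0 ↔ p ∣ x := Ideal.Quotient.eq_zero_iff_dvd p x
  have : (Ideal.span {p}).IsPrime := (Ideal.span_singleton_prime hp.ne_zero).mpr hp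
  have hdet : (M.map φ).det = 0 := by
    rw [← RingHom.mapMatrix_apply, ← RingHom.map_det, hφ]
    exact h
  obtain ⟨v', hv', hMv'⟩ := Matrix.exists_mulVec_eq_zero_iff.mpr hdet
  obtain ⟨v, rfl⟩ : ∃ v, φ ∘ v = v' := Ideal.Quotient.mk_surjective.comp_left v'
  obtain ⟨i, hi⟩ := Function.ne_iff.mp hv'
  have hdvd (j : ι) : p ∣ (M.mulVec v) j := by
    rw [← hφ, RingHom.map_mulVec]
    exact congrFun hMv' j
  choose w hw using hdvd
  exact ⟨v, w, ⟨i, fun h ↦ hi ((hφ _).mpr h)⟩, funext hw⟩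

lemma exists_sum_smul_eq_smul_of_dvd_det {ι : Type*} [Fintype ι] [DecidableEq ι]
    (b : Basis ι R S) {p : R} (hp : Prime p) {v : ι → S} (h : p ∣ b.det v) :
    ∃ c : ι → R, (∃ i, ¬ p ∣ c i) ∧ ∃ z, ∑ i, c i • v i = p • z := by
  obtain ⟨c, w, hc, hw⟩ := exists_mulVec_eq_smul_of_dvd_det hp (b.det_apply v ▸ h)
  refine ⟨c, hc, b.equivFun.symm w, b.equivFun.injective (funext fun i ↦ ?_)⟩
  simpa [Matrix.mulVec, dotProduct, Basis.toMatrix_apply, mul_comm, Finsupp.single_apply]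
    using congrFun hw i

lemma exists_aeval_dvd_of_dvd_det_pow {n : ℕ} (b : Basis (Fin n) R S) {y : S} {p : R}
    (hp : Prime p) (h : p ∣ b.det (fun i ↦ y ^ (i : ℕ))) :
    ∃ f : R[X], ¬ C p ∣ f ∧ f.degree < n ∧ algebraMap R S p ∣ aeval y f := by
  obtain ⟨c, ⟨i, hi⟩, z, hz⟩ := exists_sum_smul_eq_smul_of_dvd_det b hp h
  refine ⟨∑ j : Fin n, C (c j) * X ^ (j : ℕ), fun hdvd ↦ hi ?_, degree_sum_fin_lt c, z, ?_⟩
  · have := (C_dvd_iff_dvd_coeff _ _).mp hdvd i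
    simpa [coeff_X_pow, Fin.val_inj] using this
  · simpa [Algebra.smul_def] using hz

lemma degree_divByMonic_X_sub_C_lt {f : R[X]} {n : ℕ} (a : R) (hf : f.degree < (n + 1 : ℕ)) :
    (f /ₘ (X - C a)).degree < n := by
  rw [degree_lt_iff_coeff_zero] at hf ⊢
  intro k hk
  rw [coeff_divByMonic_X_sub_C]
  exact Finset.sum_eq_zero fun i hi ↦ by rw [hf i (by grind), mul_zero]

lemma le_card_of_pow_dvd_multiset_prod {M : Type*} [CommMonoidWithZero M] [IsCancelMulZero M]
    {p : M} (hp : Prime p) {t : Multiset M} (ht : ∀ x ∈ t, ¬ p ^ 2 ∣ x) {k : ℕ}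
    (h : p ^ k ∣ t.prod) : k ≤ t.card := by
  induction t using Multiset.induction generalizing k with
  | empty =>
    by_contra hk
    have hk : k ≠ 0 := by simpa using hk
    exact hp.not_isUnit (isUnit_of_dvd_one ((dvd_pow_self p hk).trans (by simpa using h)))
  | cons x t ih =>
    obtain _ | k := k
    · exact Nat.zero_le _
    have hx : ¬ p ^ 2 ∣ x := ht x (Multiset.mem_cons_self x t)
    rw [Multiset.card_cons, Nat.add_le_add_iff_right]
    apply ih fun z hz ↦ ht z (Multiset.mem_cons_of_mem hz)
    rw [Multiset.prod_cons] at h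
    by_cases hpx : p ∣ x
    · obtain ⟨x, rfl⟩ := hpx
      rw [pow_succ', mul_assoc, mul_dvd_mul_iff_left hp.ne_zero] at h
      rw [pow_two, mul_dvd_mul_iff_left hp.ne_zero] at hx
      exact hp.pow_dvd_of_dvd_mul_left k hx h
    · exact (pow_dvd_pow p k.le_succ).trans (hp.pow_dvd_of_dvd_mul_left _ hpx h)

variable [IsDomain R] [IsPrincipalIdealRing R]

lemma exists_dvd_mul_prod_erase [DecidableEq R] {p : R} (hp : Prime p) (y : S) (s : Multiset R)
    {f : R[X]} (w : S) (hf : ¬ C p ∣ f) (hdeg : f.degree < s.card)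
    (hwf : algebraMap R S p ∣ w * aeval y f)
    (hws : algebraMap R S p ∣ w * (s.map fun a ↦ y - algebraMap R S a).prod) :
    ∃ a ∈ s, algebraMap R S p ∣ w * ((s.erase a).map fun a ↦ y - algebraMap R S a).prod := by
  induction s using Multiset.induction generalizing f w with
  | empty =>
    obtain rfl : f = 0 := by simpa using hdeg
    exact absurd (dvd_zero _) hf
  | cons a s ih =>
    set g := f /ₘ (X - C a)
    have hfg : C (f.eval a) + (X - C a) * g = f := by
      rw [← modByMonic_X_sub_C_eq_C_eval, modByMonic_add_div]
    have hfy : w * aeval y f =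
        algebraMap R S (f.eval a) * w + w * (y - algebraMap R S a) * aeval y g := by
      nth_rw 1 [← hfg]
      simp only [map_add, map_mul, map_sub, aeval_C, aeval_X]
      ring
    rw [Multiset.map_cons, Multiset.prod_cons, ← mul_assoc] at hws
    by_cases ha : p ∣ f.eval a
    · have hg : ¬ C p ∣ g := fun hg ↦ hf <| hfg ▸ dvd_add (_root_.map_dvd C ha) (hg.mul_left _)
      have hgdeg : g.degree < s.card :=
        degree_divByMonic_X_sub_C_lt a (by rwa [← Multiset.card_cons a s])
      have hwg : algebraMap R S p ∣ w * (y - algebraMap R S a) * aeval y g :=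
        (dvd_add_right ((_root_.map_dvd _ ha).mul_right w)).mp (hfy ▸ hwf)
      obtain ⟨c, hc, hdvd⟩ := ih _ hg hgdeg hwg hws
      refine ⟨c, Multiset.mem_cons_of_mem hc, ?_⟩
      rwa [Multiset.erase_cons_tail_of_mem hc, Multiset.map_cons, Multiset.prod_cons, ← mul_assoc]
    · refine ⟨a, Multiset.mem_cons_self a s, ?_⟩
      rw [Multiset.erase_cons_head]
      set P := (s.map fun a ↦ y - algebraMap R S a).prod
      have hcop : IsCoprime (algebraMap R S p) (algebraMap R S (f.eval a)) :=
        (hp.irreducible.coprime_iff_not_dvd.mpr ha).map _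
      apply hcop.dvd_of_dvd_mul_left
      convert dvd_sub (hwf.mul_right P) (hws.mul_right (aeval y g)) using 1
      rw [hfy]
      ring

lemma not_dvd_det_pow_of_norm {n : ℕ} (b : Basis (Fin n) R S) {y : S} {p : R} (hp : Prime p)
    (s : Multiset R) (hs : s.card = n)
    (hps : algebraMap R S p ∣ (s.map fun a ↦ y - algebraMap R S a).prod)
    (hnorm : ∀ a ∈ s, ¬ p ^ 2 ∣ Algebra.norm R (y - algebraMap R S a)) :
    ¬ p ∣ b.det (fun i ↦ y ^ (i : ℕ)) := by
  classical
  intro h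
  obtain ⟨f, hf, hdeg, hfy⟩ := exists_aeval_dvd_of_dvd_det_pow b hp h
  obtain ⟨a, ha, hdvd⟩ :=
    exists_dvd_mul_prod_erase hp y s 1 hf (by rwa [hs]) (by simpa) (by simpa)
  have hpow : p ^ n ∣ ((s.erase a).map fun a ↦ Algebra.norm R (y - algebraMap R S a)).prod := by
    simpa [map_multiset_prod, Algebra.norm_algebraMap_of_basis b] using
      _root_.map_dvd (Algebra.norm R) hdvd
  have hle := le_card_of_pow_dvd_multiset_prod hp (fun x hx ↦ ?_) hpow
  · rw [Multiset.card_map, Multiset.card_erase_of_mem ha, hs] at hle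
    have hn : 0 < n := hs ▸ Multiset.card_pos_iff_exists_mem.mpr ⟨a, ha⟩
    exact absurd hle (Nat.pred_lt hn.ne').not_ge
  · obtain ⟨c, hc, rfl⟩ := Multiset.mem_map.mp hx
    exact hnorm c (Multiset.mem_of_mem_erase hc)

end Maximality

section Resultant

lemma norm_aeval_gen_eq_resultant {K L : Type*} [Field K] [Field L] [Algebra K L]
    [Algebra.IsSeparable K L] (pb : PowerBasis K L) {g : K[X]} {n : ℕ} (hg : g.natDegree ≤ n) :
    Algebra.norm K (aeval pb.gen g) =
      resultant (minpoly K pb.gen) g (minpoly K pb.gen).natDegree n := by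
  classical
  have := pb.finite
  let E := AlgebraicClosure L
  have hmonic := minpoly.monic pb.isIntegral_gen
  have hnodup : ((minpoly K pb.gen).map (algebraMap K E)).roots.Nodup :=
    nodup_roots (Separable.map (Algebra.IsSeparable.isSeparable K pb.gen))
  have hprod : ∏ σ : L →ₐ[K] E, σ (aeval pb.gen g) =
      (((minpoly K pb.gen).map (algebraMap K E)).roots.map (g.map (algebraMap K E)).eval).prod := by
    rw [Fintype.prod_equiv pb.liftEquiv' _ (fun x ↦ (g.map (algebraMap K E)).eval x.1) fun σ ↦ by
        rw [PowerBasis.liftEquiv'_apply_coe, eval_map_algebraMap, aeval_algHom_apply],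
      Finset.prod_mem_multiset _ _ (g.map (algebraMap K E)).eval fun _ ↦ rfl,
      Finset.prod_eq_multiset_prod, Multiset.toFinset_val, hnodup.dedup]
  apply (algebraMap K E).injective
  rw [Algebra.norm_eq_prod_embeddings, hprod, ← resultant_map_map,
    ← hmonic.natDegree_map (algebraMap K E),
    resultant_eq_prod_eval _ _ _ (natDegree_map_le.trans hg) (IsAlgClosed.splits _),
    (hmonic.map _).leadingCoeff, one_pow, one_mul]

lemma discr_powerBasis_eq_discr_minpoly {K L : Type*} [Field K] [Field L] [Algebra K L]
    [Algebra.IsSeparable K L] (pb : PowerBasis K L) :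
    Algebra.discr K pb.basis = (minpoly K pb.gen).discr := by
  have := pb.finite
  have hpos : 0 < (minpoly K pb.gen).degree := minpoly.degree_pos pb.isIntegral_gen
  rw [Algebra.discr_powerBasis_eq_norm,
    norm_aeval_gen_eq_resultant pb (natDegree_derivative_le _), resultant_deriv hpos,
    (minpoly.monic pb.isIntegral_gen).leadingCoeff, mul_one, pb.finrank,
    ← pb.natDegree_minpoly, ← mul_assoc, ← mul_pow]
  simp

end Resultant

section NumberField

open NumberField Module

variable {K : Type*} [Field K] [NumberField K] {y : 𝓞 K} {pb : PowerBasis ℚ K}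

lemma minpoly_gen_eq_map_minpoly_int (hy : (y : K) = pb.gen) :
    minpoly ℚ pb.gen = (minpoly ℤ y).map (Int.castRingHom ℚ) :=
  hy ▸ minpoly.isIntegrallyClosed_eq_field_fractions ℚ K y.isIntegral

lemma norm_aeval_eq_resultant (hy : (y : K) = pb.gen) {g : ℤ[X]} {n : ℕ}
    (hg : g.natDegree ≤ n) :
    Algebra.norm ℤ (aeval y g) = resultant (minpoly ℤ y) g (minpoly ℤ y).natDegree n := by
  apply Int.cast_injective (α := ℚ)
  have hyg : ((aeval y g : 𝓞 K) : K) = aeval pb.gen (g.map (Int.castRingHom ℚ)) := by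
    rw [← hy, ← algebraMap_int_eq, aeval_map_algebraMap]
    exact (aeval_algebraMap_apply K y g).symm
  rw [Algebra.coe_norm_int, hyg, norm_aeval_gen_eq_resultant pb (natDegree_map_le.trans hg),
    minpoly_gen_eq_map_minpoly_int hy, resultant_map_map,
    (minpoly.monic y.isIntegral).natDegree_map, eq_intCast]

lemma norm_sub_intCast (hy : (y : K) = pb.gen) (a : ℤ) :
    Algebra.norm ℤ (y - algebraMap ℤ (𝓞 K) a) =
      (-1) ^ (minpoly ℤ y).natDegree * (minpoly ℤ y).eval a := by
  rw [show y - algebraMap ℤ (𝓞 K) a = aeval y (X - C a) by simp,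
    norm_aeval_eq_resultant hy (natDegree_X_sub_C a).le, resultant_X_sub_C_right _ _ _ le_rfl]

lemma coe_discr_int {ι : Type*} [Fintype ι] [DecidableEq ι] (v : ι → 𝓞 K) :
    (Algebra.discr ℤ v : ℚ) = Algebra.discr ℚ (fun i ↦ (v i : K)) := by
  rw [Algebra.discr_def, Algebra.discr_def, Int.cast_det]
  congr 1
  ext i j
  simp [Algebra.traceMatrix_apply, Algebra.traceForm_apply, Algebra.coe_trace_int]

lemma discr_minpoly_eq_det_pow_sq_mul_discr (hy : (y : K) = pb.gen) {n : ℕ}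
    (b : Basis (Fin n) ℤ (𝓞 K)) :
    (minpoly ℚ pb.gen).discr = (b.det fun i ↦ y ^ (i : ℕ) : ℤ) ^ 2 * NumberField.discr K := by
  obtain rfl : pb.dim = n := by
    rw [← pb.finrank, ← RingOfIntegers.rank, finrank_eq_card_basis b, Fintype.card_fin]
  have hpow : (fun i : Fin pb.dim ↦ ((y ^ (i : ℕ) : 𝓞 K) : K)) = pb.basis := by
    ext i
    rw [pb.basis_eq_pow, ← hy]
    norm_cast
  have hZ := discr_eq_det_sq_mul_discr b fun i ↦ y ^ (i : ℕ)
  rw [NumberField.discr_eq_discr K b] at hZ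
  rw [← discr_powerBasis_eq_discr_minpoly, ← hpow, ← coe_discr_int, hZ]
  push_cast
  rfl

end NumberField

section CoefficientLists

/-- The polynomial with a given list of coefficients, highest degree first; lists of numbers are
what the kernel can compute with. -/
noncomputable def ofCoeffs {R : Type*} [Semiring R] : List R → R[X]
  | [] => 0
  | a :: l => C a * X ^ l.length + ofCoeffs l

/-- The coefficients of the derivative of `ofCoeffs l`, used to compute discriminants. -/
def derivCoeffs {R : Type*} [Semiring R] : List R → List R
  | [] => []
  | [_] => []
  | a :: b :: l => a * (l.length + 1) :: derivCoeffs (b :: l)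

section Semiring

variable {R : Type*} [Semiring R]

lemma degree_ofCoeffs_lt (l : List R) : (ofCoeffs l).degree < l.length := by
  induction l with
  | nil => simp [ofCoeffs]
  | cons a l ih =>
    rw [ofCoeffs, List.length_cons]
    refine (degree_add_le _ _).trans_lt (max_lt ?_ (ih.trans (by norm_cast; lia)))
    exact (degree_C_mul_X_pow_le _ _).trans_lt (by norm_cast; lia)

lemma natDegree_ofCoeffs_le (l : List R) : (ofCoeffs l).natDegree ≤ l.length - 1 := by
  nontriviality R
  obtain h | h := eq_or_ne (ofCoeffs l) 0
  · simp [h]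
  · exact Nat.le_sub_one_of_lt ((natDegree_lt_iff_degree_lt h).mpr (degree_ofCoeffs_lt l))

lemma monic_ofCoeffs (l : List R) : (ofCoeffs (1 :: l)).Monic := by
  rw [ofCoeffs, C_1, one_mul]
  exact monic_X_pow_add (degree_ofCoeffs_lt l)

lemma natDegree_ofCoeffs [Nontrivial R] (l : List R) :
    (ofCoeffs (1 :: l)).natDegree = l.length := by
  rw [ofCoeffs, C_1, one_mul]
  apply natDegree_eq_of_degree_eq_some
  rw [degree_add_eq_left_of_degree_lt (by simpa using degree_ofCoeffs_lt l), degree_X_pow]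

lemma length_derivCoeffs (l : List R) : (derivCoeffs l).length = l.length - 1 := by
  induction l using derivCoeffs.induct <;> simp_all [derivCoeffs]

lemma derivative_ofCoeffs (l : List R) : derivative (ofCoeffs l) = ofCoeffs (derivCoeffs l) := by
  induction l using derivCoeffs.induct with
  | case1 => simp [ofCoeffs, derivCoeffs]
  | case2 => simp [ofCoeffs, derivCoeffs]
  | case3 a b l ih =>
    rw [ofCoeffs, derivative_add, ih, derivCoeffs, ofCoeffs, derivative_C_mul_X_pow]
    simp [length_derivCoeffs]

lemma map_ofCoeffs {S : Type*} [Semiring S] (φ : R →+* S) (l : List R) :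
    (ofCoeffs l).map φ = ofCoeffs (l.map φ) := by
  induction l with
  | nil => simp [ofCoeffs]
  | cons a l ih => simp [ofCoeffs, ih]

lemma C_mul_ofCoeffs (c : R) (l : List R) : C c * ofCoeffs l = ofCoeffs (l.map (c * ·)) := by
  induction l with
  | nil => simp [ofCoeffs]
  | cons a l ih => simp [ofCoeffs, mul_add, ih, mul_assoc]

lemma ofCoeffs_mul_X (l : List R) : ofCoeffs l * X = ofCoeffs (l ++ [0]) := by
  induction l with
  | nil => simp [ofCoeffs]
  | cons a l ih => simp [ofCoeffs, add_mul, ih, mul_assoc, pow_succ]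

end Semiring

lemma ofCoeffs_sub {R : Type*} [Ring R] {l₁ l₂ : List R} (h : l₁.length = l₂.length) :
    ofCoeffs l₁ - ofCoeffs l₂ = ofCoeffs (l₁.zipWith (· - ·) l₂) := by
  induction l₁ generalizing l₂ with
  | nil => simp_all [ofCoeffs, eq_comm]
  | cons a l₁ ih =>
    obtain ⟨b, l₂, rfl⟩ := List.exists_cons_of_length_eq_add_one h.symm
    rw [List.length_cons, List.length_cons, Nat.add_right_cancel_iff] at h
    simp only [ofCoeffs, List.zipWith_cons_cons, ← ih h, List.length_zipWith, h, min_self, C_sub]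
    noncomm_ring

variable {R : Type*} [CommSemiring R]

lemma eval_ofCoeffs (x : R) (l : List R) :
    (ofCoeffs l).eval x = l.foldl (fun s a ↦ s * x + a) 0 := by
  have key (s : R) : l.foldl (fun s a ↦ s * x + a) s = s * x ^ l.length + (ofCoeffs l).eval x := by
    induction l generalizing s with
    | nil => simp [ofCoeffs]
    | cons a l ih =>
      simp only [List.foldl_cons, ih, List.length_cons, ofCoeffs, eval_add, eval_mul, eval_C,
        eval_pow, eval_X]
      ring
  rw [key, zero_mul, zero_add]

lemma C_dvd_ofCoeffs {c : R} {l : List R} (h : ∀ a ∈ l, c ∣ a) : C c ∣ ofCoeffs l := by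
  induction l with
  | nil => exact dvd_zero _
  | cons a l ih =>
    rw [List.forall_mem_cons] at h
    exact dvd_add ((_root_.map_dvd C h.1).mul_right _) (ih h.2)

end CoefficientLists

section EuclideanAlgorithm

lemma resultant_mul_add {R : Type*} [CommRing R] {h s u : R[X]} {n : ℕ} (hh : h.Monic)
    (hn : h.natDegree = n + 1) (hs : s.natDegree ≤ n) (hu : u.natDegree ≤ 1) :
    resultant (s + h * u) h (n + 2) (n + 1) = resultant h s (n + 1) n := by
  have hcoeff : h.coeff (n + 1) = 1 := hn ▸ hh.coeff_natDegree
  rw [resultant_add_mul_left _ _ _ _ _ (by lia) hn.le, resultant_add_left_deg _ _ _ _ 2 hs,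
    resultant_comm, hcoeff, one_pow, mul_one, ← mul_assoc, ← pow_add,
    Even.neg_one_pow (by grind), one_mul]

lemma ofCoeffs_eq_add_mul_X_add_C {R : Type*} [CommRing R] {f h r : List R} {q : R}
    (hf : f.length = h.length + 1) (hqr : f.zipWith (· - ·) (h ++ [0]) = q :: r) :
    ofCoeffs (1 :: f) =
      ofCoeffs (r.zipWith (· - ·) (h.map (q * ·))) + ofCoeffs (1 :: h) * (X + C q) := by
  have hr : r.length = h.length := by simpa [hf] using (congrArg List.length hqr).symm
  have hsub : ofCoeffs f - ofCoeffs (h ++ [0]) = C q * X ^ h.length + ofCoeffs r := by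
    rw [ofCoeffs_sub (by simp [hf]), hqr, ofCoeffs, hr]
  rw [← ofCoeffs_mul_X] at hsub
  rw [← ofCoeffs_sub (by simp [hr]), ← C_mul_ofCoeffs]
  simp only [ofCoeffs, hf, C_1]
  linear_combination hsub

/-- The resultant of the monic polynomial with lower coefficients `f` and the polynomial with
coefficients `g`, for lists of length `n + 1`, by the Euclidean algorithm in its generic shape: each
division lowers the degree by exactly one. A leading coefficient that vanishes on the way makes the
value `0`, so only nonzero values are meaningful. -/
def euclidResultant {K : Type*} [Field K] : ℕ → List K → List K → K
  | 0, _, g => g.headD 0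
  | n + 1, f, g =>
    let c := g.headD 0
    let h := g.tail.map (c⁻¹ * ·)
    let d := f.zipWith (· - ·) (h ++ [0])
    let q := d.headD 0
    let s := d.tail.zipWith (· - ·) (h.map (q * ·))
    c ^ (n + 2) * euclidResultant n h s

lemma resultant_ofCoeffs_eq_euclidResultant {K : Type*} [Field K] {n : ℕ} {f g : List K}
    (hf : f.length = n + 1) (hg : g.length = n + 1) (h0 : euclidResultant n f g ≠ 0) :
    resultant (ofCoeffs (1 :: f)) (ofCoeffs g) (n + 1) n = euclidResultant n f g := by
  induction n generalizing f g with
  | zero =>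
    obtain ⟨c, rfl⟩ := List.length_eq_one_iff.mp hg
    simp [euclidResultant, ofCoeffs]
  | succ n ih =>
    obtain ⟨c, g, rfl⟩ := List.exists_cons_of_length_eq_add_one hg
    simp only [euclidResultant, List.headD_cons, List.tail_cons] at h0 ⊢
    set h := g.map (c⁻¹ * ·)
    have hlen : h.length = n + 1 := by simpa [h] using hg
    obtain ⟨q, r, hqr⟩ := List.exists_cons_of_length_eq_add_one
      (show (f.zipWith (· - ·) (h ++ [0])).length = n + 1 + 1 by simp [hf, hlen])
    have hr : r.length = n + 1 := by
      simpa [hf, hlen] using congrArg List.length hqr.symm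
    rw [hqr, List.headD_cons, List.tail_cons] at h0 ⊢
    set s := r.zipWith (· - ·) (h.map (q * ·))
    have hslen : s.length = n + 1 := by simp [s, hr, hlen]
    have hc : c ≠ 0 := fun hc ↦ h0 (by simp [hc])
    have hg : ofCoeffs (c :: g) = C c * ofCoeffs (1 :: h) := by
      simp [C_mul_ofCoeffs, h, hc]
    have hf : ofCoeffs (1 :: f) = ofCoeffs s + ofCoeffs (1 :: h) * (X + C q) :=
      ofCoeffs_eq_add_mul_X_add_C (by rw [hf, hlen]) hqr
    rw [hg, hf, resultant_C_mul_right, resultant_mul_add (monic_ofCoeffs h)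
      ((natDegree_ofCoeffs h).trans hlen)
      ((natDegree_ofCoeffs_le s).trans (by lia)) (natDegree_X_add_C q).le,
      ih hlen hslen (right_ne_zero_of_mul h0)]

lemma discr_ofCoeffs {K : Type*} [Field K] {n : ℕ} {f : List K} (hf : f.length = n + 1)
    (h0 : euclidResultant n f (derivCoeffs (1 :: f)) ≠ 0) :
    (ofCoeffs (1 :: f)).discr =
      (-1) ^ ((n + 1) * n / 2) * euclidResultant n f (derivCoeffs (1 :: f)) := by
  have hdeg := (natDegree_ofCoeffs f).trans hf
  have hres := resultant_deriv (f := ofCoeffs (1 :: f)) (natDegree_pos_iff_degree_pos.mp (by lia))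
  rw [hdeg, Nat.add_sub_cancel, (monic_ofCoeffs f).leadingCoeff, mul_one, derivative_ofCoeffs,
    resultant_ofCoeffs_eq_euclidResultant hf (by simp [length_derivCoeffs, hf]) h0] at hres
  rw [hres, ← mul_assoc, ← mul_pow]
  simp

end EuclideanAlgorithm

section Computations

/-- The coefficients of `Q` below its leading coefficient `1`, in descending order. -/
def qTail : List ℤ :=
  [-13, 116, -899, 6003, -33002, 142158, -437871, 599981, 3161522, -30157709, 149069425,
   -545068137, 1602112888, -3929042061, 8240756348, -15020495335, 23992472995, -33394267804,
   40034881756, -40888329774, 35730188833, -27316581262, 17713731976, -7068248851, -1463296732,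
   4054490087, -2555610007, 2573924261, 2363203645, -261910751]

/-- `Q` as a polynomial over `ℤ`. -/
noncomputable def intQ : ℤ[X] :=
  ofCoeffs (1 :: qTail)

/-- The integer `m` for which the polynomial `Q` has discriminant `29 ^ 43 * (19 ^ 2 * m) ^ 2`. -/
def cofactor : ℤ :=
  45937283904756196654924212036222873897674963644506039115505954412242140194074909307290 * 10 ^ 87 +
    566805230395183541673246966886529017707872923422342277633921430675228785458902437662433

/-- The double root of `Q` modulo `cofactor`: modulo `cofactor`, the gcd of `Q` and its derivative
is `X - doubleRoot`. -/
def doubleRoot : ℤ :=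
  -7587762080067653183908482186424796014066724968101489997876207511423235879040790511163 * 10 ^ 87 -
    783981732061942750680128630643848654007930894868310473435295993995599580527486861521085

lemma monic_intQ : intQ.Monic := monic_ofCoeffs qTail

lemma natDegree_intQ : intQ.natDegree = 30 := natDegree_ofCoeffs qTail

lemma map_intQ : intQ.map (Int.castRingHom ℚ) = Q := by
  simp only [intQ, qTail, ofCoeffs, Q, Polynomial.map_add, Polynomial.map_pow, Polynomial.map_mul,
    Polynomial.map_neg, Polynomial.map_ofNat, map_X, eq_intCast, Int.cast_one, Int.cast_neg,
    Int.cast_ofNat, Int.reduceNeg, List.length_cons, List.length_nil, zero_add, Nat.reduceAdd,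
    one_mul, neg_mul, pow_one, pow_zero, mul_one, add_zero]
  ring

lemma polynomial_discr_Q : Q.discr = 29 ^ 43 * (19 ^ 2 * cofactor : ℤ) ^ 2 := by
  have hres : euclidResultant 29 (qTail.map (↑)) (derivCoeffs (1 :: qTail.map (↑))) =
      (-(29 ^ 43 * (19 ^ 2 * cofactor : ℤ) ^ 2) : ℚ) := by decide +kernel
  have hm : (cofactor : ℚ) ≠ 0 := by decide +kernel
  have hQ : Q = ofCoeffs (1 :: qTail.map (↑)) := by
    simp [← map_intQ, intQ, map_ofCoeffs]
  rw [hQ, discr_ofCoeffs (n := 29) rfl (by rw [hres]; simpa using hm), hres]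
  norm_num

/-- Division by `h ^ 2`, and of the remainder by `h`, for `h = X ^ 2 - 10 * X + 3`, the double
factor of `Q` modulo `19`. -/
lemma intQ_eq_sq_mul_add : intQ =
    (X ^ 2 - 10 * X + 3) ^ 2 * ofCoeffs
      [1, 7, 150, 1419, 18894, 203401, 2291204, 24946572, 268697811, 2868422741, 30332502629,
       318643660971, 3326769956770, 34554907538433, 357302233443578, 3679971115011471,
       37768724057409867, 386424706788223192, 3942591899084446192, 40123822805581636025,
       407407278658569797091, 4128098047399445474795, 41748735451396332568764,
       421479638317867097880221, 4248246025845363237380466, 42755850099870535853861847,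
       429715962937811676849092015] +
    C 19 * (X ^ 2 - 10 * X + 3) *
      (227015820682937774962041078 * X + 5801613163671756918592743) +
    C 19 ^ 2 * (37563877694016749120000686 * X - 11629184533987798438403117) := by
  simp only [intQ, qTail, ofCoeffs, eq_intCast, Int.cast_one, Int.cast_neg, Int.cast_ofNat,
    Int.reduceNeg, List.length_cons, List.length_nil, zero_add, Nat.reduceAdd, one_mul, neg_mul,
    pow_one, pow_zero, mul_one, add_zero]
  ring

lemma cofactor_sq_dvd_eval_intQ : cofactor ^ 2 ∣ intQ.eval doubleRoot := by
  rw [intQ, eval_ofCoeffs]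
  decide +kernel

lemma cofactor_dvd_eval_derivative_intQ : cofactor ∣ (derivative intQ).eval doubleRoot := by
  rw [intQ, derivative_ofCoeffs, eval_ofCoeffs]
  decide +kernel

lemma C_dvd_X_sub_C_pow_sub {p : ℕ} (hp : p.Prime) (a : ℤ) :
    C (p : ℤ) ∣ (X - C a) ^ p - (X ^ p - C a) := by
  have := Fact.mk hp
  obtain ⟨u, hu⟩ := exists_add_pow_prime_eq hp (X - C a) (C a)
  obtain ⟨v, hv⟩ : (p : ℤ) ∣ a ^ p - a := by
    rw [← ZMod.intCast_zmod_eq_zero_iff_dvd]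
    simp
  refine ⟨-((X - C a) * C a * u + C v), ?_⟩
  have hv : C a ^ p - C a = C (p : ℤ) * C v := by rw [← C_pow, ← C_sub, hv, C_mul]
  rw [sub_add_cancel] at hu
  rw [C_eq_natCast] at *
  linear_combination -hu - hv

lemma C_twentyNine_dvd_intQ_sub : C 29 ∣ intQ - (X - C 13) * (X - C 4) ^ 29 := by
  have hlist : C 29 ∣ intQ - (X - C 13) * (X ^ 29 - C 4) := by
    have hcoeffs : (X - C 13) * (X ^ 29 - C 4) =
        ofCoeffs (1 :: -13 :: (List.replicate 27 0 ++ [-4, 52]) : List ℤ) := by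
      simp only [ofCoeffs, List.replicate, List.cons_append, List.nil_append, List.length_cons,
        List.length_nil, eq_intCast, Int.cast_one, Int.cast_neg, Int.cast_ofNat, Int.cast_zero,
        Int.reduceNeg, zero_add, Nat.reduceAdd, one_mul, neg_mul, zero_mul, pow_one, pow_zero,
        mul_one, add_zero]
      ring
    rw [hcoeffs, intQ, ofCoeffs_sub (by rfl)]
    exact C_dvd_ofCoeffs (by decide +kernel)
  have hpow := C_dvd_X_sub_C_pow_sub (p := 29) (by norm_num) 4
  convert dvd_sub hlist (hpow.mul_left (X - C 13)) using 1
  ring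

end Computations

lemma eq_prime_pow_of_sq_mul_eq {p i D M : ℤ} {k : ℕ} (hp : Prime p) (hM : M ≠ 0) (hMi : M ∣ i)
    (hpi : ¬ p ∣ i) (h : i ^ 2 * D = p ^ k * M ^ 2) : D = p ^ k := by
  obtain ⟨j, rfl⟩ := hMi
  have hj : j ^ 2 * D = p ^ k := by
    apply mul_left_cancel₀ (pow_ne_zero 2 hM)
    linear_combination h
  have hcop : IsCoprime j (p ^ k) :=
    ((hp.irreducible.coprime_iff_not_dvd.mpr fun hpj ↦ hpi (hpj.mul_left M)).pow_left).symm
  have hunit : IsUnit j := hcop.isUnit_of_dvd ((dvd_pow_self j two_ne_zero).trans ⟨D, hj.symm⟩)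
  rwa [Int.isUnit_sq hunit, one_mul] at hj

section Index

open NumberField Module

section IntegrallyClosed

variable {S : Type*} [CommRing S] [IsDomain S] [IsIntegrallyClosed S] {y : S}
  (b : Basis (Fin 30) ℤ S)

lemma nineteen_sq_dvd_det_pow (hy : aeval y intQ = 0) :
    19 ^ 2 ∣ b.det (fun i ↦ y ^ (i : ℕ)) := by
  have hdeg : (X ^ 2 - 10 * X + 3 : ℤ[X]).natDegree = 2 := by compute_degree!
  have hE : (37563877694016749120000686 * X - 11629184533987798438403117 : ℤ[X]).degree <
      intQ.degree := by
    apply degree_lt_degree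
    rw [natDegree_intQ]
    exact (show _ ≤ 1 by compute_degree).trans_lt (by norm_num)
  simpa only [hdeg] using pow_natDegree_dvd_det_pow b monic_intQ natDegree_intQ hy
    (by monicity!) hE intQ_eq_sq_mul_add

lemma cofactor_dvd_det_pow (hy : aeval y intQ = 0) :
    cofactor ∣ b.det (fun i ↦ y ^ (i : ℕ)) :=
  dvd_det_pow_of_dvd_eval b monic_intQ natDegree_intQ hy cofactor_sq_dvd_eval_intQ
    cofactor_dvd_eval_derivative_intQ

lemma nineteen_sq_mul_cofactor_dvd_det_pow (hy : aeval y intQ = 0) :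
    19 ^ 2 * cofactor ∣ b.det (fun i ↦ y ^ (i : ℕ)) := by
  have hcop : IsCoprime (19 ^ 2) cofactor := Int.isCoprime_iff_gcd_eq_one.mpr (by decide +kernel)
  exact hcop.mul_dvd (nineteen_sq_dvd_det_pow b hy) (cofactor_dvd_det_pow b hy)

end IntegrallyClosed

variable {K : Type*} [Field K] [NumberField K]

lemma prime_twentyNine : Prime (29 : ℤ) := Nat.prime_iff_prime_int.mp (by norm_num)

lemma twentyNine_not_dvd_det_pow (b : Basis (Fin 30) ℤ (𝓞 K)) {y : 𝓞 K} {pb : PowerBasis ℚ K}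
    (hy : (y : K) = pb.gen) (hmin : minpoly ℤ y = intQ) :
    ¬ 29 ∣ b.det (fun i ↦ y ^ (i : ℕ)) := by
  have hnorm (a : ℤ) : Algebra.norm ℤ (y - algebraMap ℤ (𝓞 K) a) = intQ.eval a := by
    rw [norm_sub_intCast hy, hmin, natDegree_intQ, Even.neg_one_pow (by decide), one_mul]
  refine not_dvd_det_pow_of_norm b prime_twentyNine (13 ::ₘ Multiset.replicate 29 4) rfl ?_ ?_
  · have hdvd := _root_.map_dvd (aeval y) C_twentyNine_dvd_intQ_sub
    rw [map_sub, ← hmin, minpoly.aeval, zero_sub, dvd_neg] at hdvd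
    rw [Multiset.map_cons, Multiset.prod_cons, Multiset.map_replicate, Multiset.prod_replicate]
    simpa only [map_mul, map_pow, map_sub, aeval_X, aeval_C] using hdvd
  · have heval (a : ℤ) (ha : a ∈ ({13, 4} : Finset ℤ)) : ¬ 29 ^ 2 ∣ intQ.eval a := by
      rw [intQ, eval_ofCoeffs]
      revert a
      decide +kernel
    intro a ha
    rw [hnorm]
    exact heval a (by simpa [Multiset.mem_replicate] using ha)

lemma discr_eq_of_minpoly_gen_eq_Q (pb : PowerBasis ℚ K) (hpb : minpoly ℚ pb.gen = Q) :
    NumberField.discr K = 29 ^ 43 := by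
  have hint : IsIntegral ℤ pb.gen := ⟨intQ, monic_intQ, by
    rw [← aeval_def, ← aeval_map_algebraMap ℚ, algebraMap_int_eq, map_intQ, ← hpb, minpoly.aeval]⟩
  let y : 𝓞 K := ⟨pb.gen, hint⟩
  have hmin : minpoly ℤ y = intQ := by
    apply map_injective (Int.castRingHom ℚ) Int.cast_injective
    rw [← minpoly_gen_eq_map_minpoly_int (y := y) rfl, hpb, map_intQ]
  have hrank : finrank ℤ (𝓞 K) = 30 := by
    rw [RingOfIntegers.rank, pb.finrank, ← pb.natDegree_minpoly, hpb, ← map_intQ,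
      monic_intQ.natDegree_map, natDegree_intQ]
  let b := finBasisOfFinrankEq ℤ (𝓞 K) hrank
  have hdiscr := discr_minpoly_eq_det_pow_sq_mul_discr (y := y) rfl b
  rw [hpb, polynomial_discr_Q] at hdiscr
  exact eq_prime_pow_of_sq_mul_eq prime_twentyNine (by decide +kernel)
    (nineteen_sq_mul_cofactor_dvd_det_pow b (hmin ▸ minpoly.aeval ℤ y))
    (twentyNine_not_dvd_det_pow b rfl hmin) (mod_cast hdiscr.symm)

end Index

theorem discr_Q (hQ : Irreducible Q) :
    haveI : Fact (Irreducible Q) := ⟨hQ⟩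
    haveI : CharZero (AdjoinRoot Q) :=
      charZero_of_injective_algebraMap (algebraMap ℚ (AdjoinRoot Q)).injective
    haveI : FiniteDimensional ℚ (AdjoinRoot Q) :=
      (AdjoinRoot.powerBasis hQ.ne_zero).finite
    haveI : NumberField (AdjoinRoot Q) := ⟨⟩
    NumberField.discr (AdjoinRoot Q) = 29 ^ 43 := by
  have hmonic : Q.Monic := map_intQ ▸ monic_intQ.map _
  have : Fact (Irreducible Q) := ⟨hQ⟩
  have : CharZero (AdjoinRoot Q) :=
    charZero_of_injective_algebraMap (algebraMap ℚ (AdjoinRoot Q)).injective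
  have : FiniteDimensional ℚ (AdjoinRoot Q) := (AdjoinRoot.powerBasis hQ.ne_zero).finite
  have : NumberField (AdjoinRoot Q) := ⟨⟩
  exact discr_eq_of_minpoly_gen_eq_Q (AdjoinRoot.powerBasis hQ.ne_zero)
    (AdjoinRoot.minpoly_powerBasis_gen_of_monic hmonic)
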